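/- arXiv:2307.02366 — 2 statements merged into one kernel-verified Lean document; each statement's English description precedes it below -/
import Mathlib

section
/- Let p be a prime and ℓ ≥ 1; work in Z_{p^ℓ}. Let k > ℓ and 0 ≤ m ≤ k−ℓ−1, and let s = ⌊b_k ⋯ b_{k−m} (p−1) ⋯ (p−1) b_{k−m−ℓ−1} ⋯ b_0⌋_p with b_k ≠ 0, where the digits in positions k−m−1 down to k−m−ℓ are all equal to p−1 (ℓ consecutive digits). Let s' = ⌊b_k ⋯ b_{k−m} (p−1) ⋯ (p−1) b_{k−m−ℓ−1} ⋯ b_0⌋_p be obtained from s by deleting the digit in position k−m−ℓ (so only ℓ−1 consecutive digits p−1 remain). Then bin_s ≡_ν Alt(bin_{s'}, p^{k−m−ℓ}); in particular Π_i(bin_s) = Π_i(bin_{s'}) for every 0 ≤ i < ℓ, and Z(bin_s) = Z(bin_{s'}) + (p−1)p^{k+ℓ−1}. -/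
/-- The shift operator `θ`: `θ f n = f (n+1)`. -/
def shiftSeq {M : ℕ} (f : ℕ → ZMod M) : ℕ → ZMod M := fun n => f (n + 1)

/-- The difference operator `Δ = θ - id`: `Δ f n = f (n+1) - f n`. -/
def deltaSeq {M : ℕ} (f : ℕ → ZMod M) : ℕ → ZMod M := fun n => f (n + 1) - f n

/-- A sequence is periodic if `θ^j f = f` for some `j ≥ 1`. -/
def IsPeriodicSeq {M : ℕ} (f : ℕ → ZMod M) : Prop := ∃ j, 1 ≤ j ∧ Function.Periodic f j

/-- The period `τ(f)`: the least `j ≥ 1` with `θ^j f = f`. -/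
noncomputable def perSeq {M : ℕ} (f : ℕ → ZMod M) : ℕ :=
  sInf {j | 1 ≤ j ∧ Function.Periodic f j}

/-- The trace `tr f = ∑_{i=0}^{τ(f)-1} f i`. -/
noncomputable def trSeq {M : ℕ} (f : ℕ → ZMod M) : ZMod M :=
  ∑ i ∈ Finset.range (perSeq f), f i

/-- The sum operator `Σ`: `Σf(0) = 0`, `Σf(n) = f(n-1) + Σf(n-1)`. -/
def sigmaSeq {M : ℕ} (f : ℕ → ZMod M) : ℕ → ZMod M
  | 0 => 0
  | n + 1 => f n + sigmaSeq f n

/-- A sequence is nilpotent if `Δ^η f = 0` for some `η ≥ 1`. -/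
def IsNilpotentSeq {M : ℕ} (f : ℕ → ZMod M) : Prop := ∃ η, 1 ≤ η ∧ deltaSeq^[η] f = 0

/-- A sequence is idempotent if `Δ^η f = f` for some `η ≥ 1`. -/
def IsIdempotentSeq {M : ℕ} (f : ℕ → ZMod M) : Prop := ∃ η, 1 ≤ η ∧ deltaSeq^[η] f = f

/-- The nilpotency index: the least `η ≥ 1` with `Δ^η f = 0`. -/
noncomputable def nilIndex {M : ℕ} (f : ℕ → ZMod M) : ℕ :=
  sInf {η | 1 ≤ η ∧ deltaSeq^[η] f = 0}

/-- The idempotency index: the least `η ≥ 1` with `Δ^η f = f`. -/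
noncomputable def idemIndex {M : ℕ} (f : ℕ → ZMod M) : ℕ :=
  sInf {η | 1 ≤ η ∧ deltaSeq^[η] f = f}

/-- The `p`-adic valuation on `ZMod M`, with `ν(0) = ∞`. -/
noncomputable def nuVal (p : ℕ) {M : ℕ} (a : ZMod M) : ℕ∞ :=
  if a = 0 then ⊤ else (padicValNat p a.val : ℕ∞)

/-- `Double(f, q^t)`: repeat `q` times each successive `q^t`-subsequence of `f`. -/
def DoubleSeq {M : ℕ} (f : ℕ → ZMod M) (q t : ℕ) : ℕ → ZMod M :=
  fun n => f ((n / q ^ (t + 1)) * q ^ t + n % q ^ t)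

/-- `Alt(f, q^t)`: alternate `(q-1)q^t` zeros with the successive `q^t`-subsequences of `f`. -/
def AltSeq {M : ℕ} (f : ℕ → ZMod M) (q t : ℕ) : ℕ → ZMod M :=
  fun n => if (n / q ^ t) % q = q - 1 then f ((n / q ^ (t + 1)) * q ^ t + n % q ^ t) else 0

/-- The binomial sequence `bin_s(n) = C(n,s) mod p^ℓ`. -/
def binSeq (p l : ℕ) (s : ℕ) : ℕ → ZMod (p ^ l) := fun n => (n.choose s : ZMod (p ^ l))

/-- `f ≡_ν g`: zeros coincide, and valuations of nonzero values coincide. -/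
def nuEquiv (p : ℕ) {M : ℕ} (f g : ℕ → ZMod M) : Prop :=
  ∀ n, (f n = 0 ↔ g n = 0) ∧ (f n ≠ 0 → padicValNat p (f n).val = padicValNat p (g n).val)

/-- `Π_i(f)`: number of entries of valuation `i` in one period of `f`. -/
noncomputable def PiCount (p : ℕ) {M : ℕ} (i : ℕ) (f : ℕ → ZMod M) : ℕ :=
  ((Finset.range (perSeq f)).filter fun x => f x ≠ 0 ∧ padicValNat p (f x).val = i).card

/-- `Z(f)`: number of zero entries in one period of `f`. -/
noncomputable def ZCount {M : ℕ} (f : ℕ → ZMod M) : ℕ :=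
  ((Finset.range (perSeq f)).filter fun x => f x = 0).card

/-- The `j`-th base-`p` digit of `x`. -/
def dig (p x j : ℕ) : ℕ := x / p ^ j % p

namespace S17

lemma periodic_pow (p l s k : ℕ) (hp : p.Prime) (hs2 : s < p ^ (k + 1)) :
    Function.Periodic (binSeq p l s) (p ^ (l + k)) := by
  intro n
  unfold binSeq
  rw [Nat.add_comm n, Nat.add_choose_eq]
  push_cast
  rw [Finset.sum_eq_single (0, s)]
  · simp
  · rintro ⟨i, j⟩ hij hne
    rw [Finset.HasAntidiagonal.mem_antidiagonal] at hij
    simp only at hij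
    have hi : i ≠ 0 := by
      rintro rfl
      apply hne
      simp at hij
      simp [hij]
    have : ((p ^ (l + k)).choose i : ZMod (p ^ l)) = 0 := by
      rw [ZMod.natCast_eq_zero_iff]
      by_cases hle : i ≤ p ^ (l + k)
      · have h1 := Nat.factorization_choose_prime_pow_add_factorization hp hle hi
        have h2 : i.factorization p < k + 1 := by
          have h3 := Nat.le_of_dvd (Nat.pos_of_ne_zero hi) (Nat.ordProj_dvd i p)
          exact (Nat.pow_lt_pow_iff_right hp.one_lt).1 (by omega)
        rw [hp.pow_dvd_iff_le_factorization (Nat.choose_pos hle).ne']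
        omega
      · rw [Nat.choose_eq_zero_of_lt (by omega)]
        exact dvd_zero _
    simp [this]
  · intro h
    simp at h

lemma period_down (p l P : ℕ) (r s : ℕ) (hrs : r ≤ s)
    (h : Function.Periodic (binSeq p l s) P) : Function.Periodic (binSeq p l r) P := by
  induction s, hrs using Nat.le_induction with
  | base => exact h
  | succ s hs ih =>
    apply ih
    intro n
    have h1 := h (n + 1)
    have h2 := h n
    unfold binSeq at *
    rw [show n + 1 + P = (n + P) + 1 by ring, Nat.choose_succ_succ, Nat.choose_succ_succ] at h1
    push_cast at h1
    rw [h2] at h1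
    exact add_right_cancel h1

lemma not_periodic (p l s k : ℕ) (hp : p.Prime) (hl : 1 ≤ l) (hs1 : p ^ k ≤ s) :
    ¬ Function.Periodic (binSeq p l s) (p ^ (l + k - 1)) := by
  intro h
  have h1 := period_down p l _ _ _ hs1 h 0
  unfold binSeq at h1
  have hpk : 0 < p ^ k := pow_pos hp.pos k
  rw [Nat.choose_eq_zero_of_lt hpk, zero_add, Nat.cast_zero, ZMod.natCast_eq_zero_iff] at h1
  have hle : p ^ k ≤ p ^ (l + k - 1) := Nat.pow_le_pow_right hp.pos (by omega)
  rw [hp.pow_dvd_iff_le_factorization (Nat.choose_pos hle).ne'] at h1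
  have h2 := Nat.factorization_choose_prime_pow_add_factorization hp hle hpk.ne'
  rw [hp.factorization_pow] at h2
  simp at h2
  omega

lemma perSeq_bin (p l s k : ℕ) (hp : p.Prime) (hl : 1 ≤ l) (hs1 : p ^ k ≤ s)
    (hs2 : s < p ^ (k + 1)) : perSeq (binSeq p l s) = p ^ (l + k) := by
  set f := binSeq p l s with hf
  have hN : Function.Periodic f (p ^ (l + k)) := periodic_pow p l s k hp hs2
  have hNp : 1 ≤ p ^ (l + k) := pow_pos hp.pos _
  have hmem : perSeq f ∈ {j | 1 ≤ j ∧ Function.Periodic f j} :=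
    Nat.sInf_mem ⟨_, hNp, hN⟩
  obtain ⟨hd1, hdper⟩ := hmem
  have hmin : ∀ j, 1 ≤ j → Function.Periodic f j → perSeq f ≤ j := fun j h1 h2 =>
    Nat.sInf_le ⟨h1, h2⟩
  set d := perSeq f
  have hdvd : d ∣ p ^ (l + k) := by
    by_contra hnd
    have hr : 0 < p ^ (l + k) % d := Nat.pos_of_ne_zero fun h => hnd (Nat.dvd_of_mod_eq_zero h)
    have hlt : p ^ (l + k) % d < d := Nat.mod_lt _ hd1
    have : Function.Periodic f (p ^ (l + k) % d) := by
      intro x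
      have h1 := (hdper.nat_mul (p ^ (l + k) / d)) (x + p ^ (l + k) % d)
      rw [← h1, ← hN x]
      congr 1
      have := Nat.mod_add_div (p ^ (l + k)) d
      simp only [Nat.cast_id]
      rw [mul_comm (_ / _)]
      omega
    have := hmin _ hr this
    omega
  obtain ⟨e, he, hde⟩ := (Nat.dvd_prime_pow hp).1 hdvd
  rcases Nat.lt_or_ge e (l + k) with hlt | hge
  · exfalso
    apply not_periodic p l s k hp hl hs1
    have h1 := hdper.nat_mul (p ^ (l + k - 1 - e))
    rw [hde, Nat.cast_id, ← pow_add] at h1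
    rwa [show l + k - 1 - e + e = l + k - 1 by omega] at h1
  · rw [hde, le_antisymm he hge]

/-- delete the digit in position t -/
def del (p t x : ℕ) : ℕ := x / p ^ (t + 1) * p ^ t + x % p ^ t

lemma del_mod (p t x : ℕ) (hp : 0 < p) : del p t x % p ^ t = x % p ^ t := by
  unfold del
  rw [mul_comm, Nat.mul_add_mod, Nat.mod_mod]

lemma del_div (p t x : ℕ) (hp : 0 < p) : del p t x / p ^ t = x / p ^ (t + 1) := by
  have h : 0 < p ^ t := pow_pos hp _
  unfold del
  rw [mul_comm, Nat.mul_add_div h, Nat.div_eq_of_lt (Nat.mod_lt _ h), add_zero]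

lemma del_mod_lo (p t i x : ℕ) (hp : 0 < p) (hi : i ≤ t) : del p t x % p ^ i = x % p ^ i := by
  have h : p ^ i ∣ p ^ t := pow_dvd_pow p hi
  rw [← Nat.mod_mod_of_dvd _ h, del_mod p t x hp, Nat.mod_mod_of_dvd _ h]

lemma lex (q u w a b : ℕ) (ha : a < q) (hb : b < q) :
    a + q * u < b + q * w ↔ u < w ∨ (u = w ∧ a < b) := by
  rcases lt_trichotomy u w with h | rfl | h
  · have : q * (u + 1) ≤ q * w := Nat.mul_le_mul_left q h
    rw [mul_add] at this
    simp only [h, true_or, iff_true]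
    omega
  · simp
  · have : q * (w + 1) ≤ q * u := Nat.mul_le_mul_left q h
    rw [mul_add] at this
    constructor
    · omega
    · omega

lemma lo_iff (p t n s : ℕ) (hd : dig p n t = dig p s t) :
    n % p ^ (t + 1) < s % p ^ (t + 1) ↔ n % p ^ t < s % p ^ t := by
  unfold dig at hd
  rw [Nat.mod_pow_succ, Nat.mod_pow_succ, hd]
  omega

lemma hi_iff (p t j n s : ℕ) (hp : 0 < p) (hd : dig p n t = dig p s t) :
    del p t n % p ^ (t + j) < del p t s % p ^ (t + j) ↔
      n % p ^ (t + 1 + j) < s % p ^ (t + 1 + j) := by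
  have h : 0 < p ^ t := pow_pos hp _
  have h' : 0 < p ^ (t + 1) := pow_pos hp _
  rw [pow_add p t j, pow_add p (t + 1) j]
  simp only [Nat.mod_mul, del_mod p t _ hp, del_div p t _ hp]
  rw [lex _ _ _ _ _ (Nat.mod_lt _ h) (Nat.mod_lt _ h),
    lex _ _ _ _ _ (Nat.mod_lt _ h') (Nat.mod_lt _ h'), lo_iff p t n s hd]

lemma del_lt_iff (p t n s : ℕ) (hp : 0 < p) (hd : dig p n t = dig p s t) :
    del p t n < del p t s ↔ n < s := by
  have h : 0 < p ^ t := pow_pos hp _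
  have h' : 0 < p ^ (t + 1) := pow_pos hp _
  rw [← Nat.mod_add_div (del p t n) (p ^ t), ← Nat.mod_add_div (del p t s) (p ^ t)]
  conv_rhs => rw [← Nat.mod_add_div n (p ^ (t + 1)), ← Nat.mod_add_div s (p ^ (t + 1))]
  simp only [del_mod p t _ hp, del_div p t _ hp]
  rw [lex _ _ _ _ _ (Nat.mod_lt _ h) (Nat.mod_lt _ h),
    lex _ _ _ _ _ (Nat.mod_lt _ h') (Nat.mod_lt _ h'), lo_iff p t n s hd]

/-- Kummer with borrows -/
lemma kummer (p n s b : ℕ) (hp : p.Prime) (h : s ≤ n) (hb : n < b) :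
    padicValNat p (n.choose s) =
      ((Finset.Ico 1 b).filter fun i => n % p ^ i < s % p ^ i).card := by
  have := Fact.mk hp
  rw [padicValNat_choose h (lt_of_le_of_lt (Nat.log_le_self p n) hb)]
  congr 1
  apply Finset.filter_congr
  intro i _
  have hq : 0 < p ^ i := pow_pos hp.pos _
  generalize p ^ i = q at hq
  have e : n % q = (s % q + (n - s) % q) % q := by
    rw [← Nat.add_mod, Nat.add_sub_cancel' h]
  have h1 := Nat.mod_lt s hq
  have h2 := Nat.mod_lt (n - s) hq
  rw [e]
  generalize s % q = a at *
  generalize (n - s) % q = b at *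
  by_cases hc : a + b < q
  · rw [Nat.mod_eq_of_lt hc]; omega
  · rw [Nat.mod_eq_sub_mod (not_lt.1 hc), Nat.mod_eq_of_lt (show a + b - q < q by omega)]; omega

/-- borrow propagation -/
lemma prop_borrow (p n s t l : ℕ) (hp : 0 < p)
    (hdig : ∀ j, t ≤ j → j < t + l → dig p s j = p - 1) (i0 : ℕ) (h0 : t ≤ i0)
    (hi0 : n % p ^ i0 < s % p ^ i0) (i : ℕ) (hi : i0 ≤ i) (hi' : i ≤ t + l) :
    n % p ^ i < s % p ^ i := by
  induction i, hi using Nat.le_induction with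
  | base => exact hi0
  | succ i hi ih =>
    have ih := ih (by omega)
    have hd := hdig i (by omega) (by omega)
    unfold dig at hd
    rw [Nat.mod_pow_succ, Nat.mod_pow_succ, hd]
    have : n / p ^ i % p ≤ p - 1 := by
      have := Nat.mod_lt (n / p ^ i) hp
      omega
    have := Nat.mul_le_mul_left (p ^ i) this
    omega

lemma dvd_of_borrows (p n s i0 l : ℕ) (hp : p.Prime) (hi0 : 1 ≤ i0)
    (h : ∀ i, i0 ≤ i → i < i0 + l → n % p ^ i < s % p ^ i) : p ^ l ∣ n.choose s := by
  have := Fact.mk hp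
  by_cases hs : s ≤ n
  · rw [padicValNat_dvd_iff_le (Nat.choose_pos hs).ne',
      kummer p n s (n + i0 + l + 1) hp hs (by omega)]
    calc l = (Finset.Ico i0 (i0 + l)).card := by simp
      _ ≤ _ := by
        apply Finset.card_le_card
        intro i hi
        simp only [Finset.mem_Ico, Finset.mem_filter] at hi ⊢
        exact ⟨by omega, h i hi.1 hi.2⟩
  · rw [Nat.choose_eq_zero_of_lt (by omega)]
    exact dvd_zero _

lemma dvd_of_dig (p n s t l : ℕ) (hp : p.Prime) (hl : 1 ≤ l)
    (hdig : ∀ j, t ≤ j → j < t + l → dig p s j = p - 1) (hn : dig p n t ≠ p - 1) :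
    p ^ l ∣ n.choose s := by
  apply dvd_of_borrows p n s (t + 1) l hp (by omega)
  intro i h1 h2
  apply prop_borrow p n s t l hp.pos hdig (t + 1) (by omega) _ i h1 (by omega)
  have hd := hdig t le_rfl (by omega)
  unfold dig at hd hn
  rw [Nat.mod_pow_succ, Nat.mod_pow_succ, hd]
  have h3 := Nat.mod_lt (n / p ^ t) hp.pos
  have h4 : n / p ^ t % p + 1 ≤ p - 1 := by omega
  have h5 := Nat.mul_le_mul_left (p ^ t) h4
  have := Nat.mod_lt n (pow_pos hp.pos t)
  rw [mul_add, mul_one] at h5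
  generalize s % p ^ t = a
  omega

lemma val_cases (p n s t l : ℕ) (hp : p.Prime) (ht : 1 ≤ t) (hl : 1 ≤ l)
    (hdig : ∀ j, t ≤ j → j < t + l → dig p s j = p - 1) (hn : dig p n t = p - 1) :
    (p ^ l ∣ n.choose s ∧ p ^ l ∣ (del p t n).choose (del p t s)) ∨
      (s ≤ n ∧ del p t s ≤ del p t n ∧
        padicValNat p (n.choose s) = padicValNat p ((del p t n).choose (del p t s))) := by
  have hd : dig p n t = dig p s t := by rw [hn, hdig t le_rfl (by omega)]
  by_cases hb : n % p ^ t < s % p ^ t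
  · left
    have hA : ∀ i, t ≤ i → i ≤ t + l → n % p ^ i < s % p ^ i := fun i h1 h2 =>
      prop_borrow p n s t l hp.pos hdig t le_rfl hb i h1 h2
    constructor
    · exact dvd_of_borrows p n s t l hp ht fun i h1 h2 => hA i h1 (by omega)
    · apply dvd_of_borrows p _ _ t l hp ht
      intro i h1 h2
      obtain ⟨j, rfl⟩ := Nat.exists_eq_add_of_le h1
      rw [hi_iff p t j n s hp.pos hd]
      exact hA _ (by omega) (by omega)
  · by_cases hs : s ≤ n
    · right
      have hs' : del p t s ≤ del p t n := by
        have := del_lt_iff p t n s hp.pos hd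
        omega
      refine ⟨hs, hs', ?_⟩
      set b := n + del p t n + t + 2
      rw [kummer p n s (b + 1) hp hs (by omega), kummer p _ _ b hp hs' (by omega)]
      symm
      apply Finset.card_nbij (fun i => if i < t then i else i + 1)
      · intro i hi
        simp only [Finset.coe_filter, Finset.mem_Ico, Set.mem_ofPred_eq] at hi ⊢
        split_ifs with h
        · rw [del_mod_lo p t i n hp.pos h.le, del_mod_lo p t i s hp.pos h.le] at hi
          exact ⟨by omega, hi.2⟩
        · obtain ⟨j, rfl⟩ := Nat.exists_eq_add_of_le (not_lt.1 h)
          rw [hi_iff p t j n s hp.pos hd] at hi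
          refine ⟨by omega, ?_⟩
          rw [show t + j + 1 = t + 1 + j by ring]
          exact hi.2
      · intro i _ j _ hij
        simp only at hij
        split_ifs at hij <;> omega
      · intro i hi
        simp only [Finset.coe_filter, Finset.mem_Ico, Set.mem_ofPred_eq, Set.mem_image] at hi ⊢
        by_cases h : i < t
        · refine ⟨i, ⟨by omega, ?_⟩, by simp [h]⟩
          rw [del_mod_lo p t i n hp.pos h.le, del_mod_lo p t i s hp.pos h.le]
          exact hi.2
        · have : i ≠ t := by
            rintro rfl
            exact hb hi.2
          obtain ⟨j, rfl⟩ := Nat.exists_eq_add_of_le (show t + 1 ≤ i by omega)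
          refine ⟨t + j, ⟨by omega, ?_⟩, ?_⟩
          · rw [hi_iff p t j n s hp.pos hd]
            exact hi.2
          · rw [if_neg (by omega)]
            omega
    · left
      have := del_lt_iff p t n s hp.pos hd
      rw [Nat.choose_eq_zero_of_lt (show n < s by omega),
        Nat.choose_eq_zero_of_lt (this.2 (by omega))]
      simp

lemma val_cast (p l c : ℕ) (hp : p.Prime) (h : (c : ZMod (p ^ l)) ≠ 0) :
    padicValNat p (c : ZMod (p ^ l)).val = padicValNat p c := by
  have := Fact.mk hp
  rw [Ne, ZMod.natCast_eq_zero_iff] at h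
  rw [ZMod.val_natCast]
  have h1 : c % p ^ l ≠ 0 := fun h' => h (Nat.dvd_of_mod_eq_zero h')
  have h2 : c ≠ 0 := by rintro rfl; simp at h
  have key : ∀ i ≤ l, (p ^ i ∣ c % p ^ l ↔ p ^ i ∣ c) := fun i hi =>
    Nat.dvd_mod_iff (pow_dvd_pow p hi)
  have hc : padicValNat p c < l := by
    by_contra hh
    exact h ((padicValNat_dvd_iff_le h2).2 (by omega))
  have a1 := (key (padicValNat p c) hc.le).2 pow_padicValNat_dvd
  rw [padicValNat_dvd_iff_le h1] at a1
  apply le_antisymm _ a1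
  by_contra hh
  have a2 := (key (padicValNat p c + 1) hc).1 ((padicValNat_dvd_iff_le h1).2 (by omega))
  rw [padicValNat_dvd_iff_le h2] at a2
  omega

lemma main_equiv (p s t l : ℕ) (hp : p.Prime) (ht : 1 ≤ t) (hl : 1 ≤ l)
    (hdig : ∀ j, t ≤ j → j < t + l → dig p s j = p - 1) :
    nuEquiv p (binSeq p l s) (AltSeq (binSeq p l (del p t s)) p t) := by
  have := Fact.mk hp
  intro n
  by_cases hn : dig p n t = p - 1
  · have e : AltSeq (binSeq p l (del p t s)) p t n =
      ((del p t n).choose (del p t s) : ZMod (p ^ l)) := if_pos hn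
    rw [e]
    unfold binSeq
    rcases val_cases p n s t l hp ht hl hdig hn with ⟨h1, h2⟩ | ⟨h1, h2, h3⟩
    · rw [← ZMod.natCast_eq_zero_iff] at h1 h2
      simp [h1, h2]
    · have hz : (n.choose s : ZMod (p ^ l)) = 0 ↔
          ((del p t n).choose (del p t s) : ZMod (p ^ l)) = 0 := by
        rw [ZMod.natCast_eq_zero_iff, ZMod.natCast_eq_zero_iff,
          padicValNat_dvd_iff_le (Nat.choose_pos h1).ne',
          padicValNat_dvd_iff_le (Nat.choose_pos h2).ne', h3]
      refine ⟨hz, fun hne => ?_⟩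
      rw [val_cast p l _ hp hne, val_cast p l _ hp (fun h => hne (hz.2 h)), h3]
  · have e : AltSeq (binSeq p l (del p t s)) p t n = 0 := if_neg hn
    have e2 : binSeq p l s n = 0 := by
      unfold binSeq
      rw [ZMod.natCast_eq_zero_iff]
      exact dvd_of_dig p n s t l hp hl hdig hn
    simp [e, e2]

lemma count (p t N : ℕ) (hp : 0 < p) (ht : t ≤ N) (P Q : ℕ → Prop) [DecidablePred P]
    [DecidablePred Q] (h : ∀ x, P x ↔ dig p x t = p - 1 ∧ Q (del p t x)) :
    ((Finset.range (p ^ (N + 1))).filter P).card = ((Finset.range (p ^ N)).filter Q).card := by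
  have hq : 0 < p ^ t := pow_pos hp _
  have hN : p ^ N = p ^ t * p ^ (N - t) := by rw [← pow_add]; congr 1; omega
  have hN1 : p ^ (N + 1) = p ^ (t + 1) * p ^ (N - t) := by rw [← pow_add]; congr 1; omega
  apply Finset.card_nbij (del p t)
  · intro x hx
    simp only [Finset.coe_filter, Finset.mem_range, Set.mem_ofPred_eq] at hx ⊢
    refine ⟨?_, ((h x).1 hx.2).2⟩
    rw [hN, mul_comm, ← Nat.div_lt_iff_lt_mul hq, del_div p t x hp]
    apply Nat.div_lt_of_lt_mul
    rw [← hN1]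
    exact hx.1
  · intro x hx y hy hxy
    simp only [Finset.coe_filter, Finset.mem_range, Set.mem_ofPred_eq] at hx hy
    have dx := ((h x).1 hx.2).1
    have dy := ((h y).1 hy.2).1
    have a1 := del_lt_iff p t x y hp (dx.trans dy.symm)
    have a2 := del_lt_iff p t y x hp (dy.trans dx.symm)
    omega
  · intro y hy
    simp only [Finset.coe_filter, Finset.mem_range, Set.mem_ofPred_eq, Set.mem_image] at hy ⊢
    set x := y % p ^ t + p ^ t * ((p - 1) + p * (y / p ^ t)) with hx
    have c1 : x % p ^ t = y % p ^ t := by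
      rw [hx, Nat.add_mul_mod_self_left, Nat.mod_mod]
    have c2 : x / p ^ t = (p - 1) + p * (y / p ^ t) := by
      rw [hx, Nat.add_mul_div_left _ _ hq, Nat.div_eq_of_lt (Nat.mod_lt _ hq), zero_add]
    have c3 : x / p ^ (t + 1) = y / p ^ t := by
      rw [pow_succ, ← Nat.div_div_eq_div_mul, c2, Nat.add_mul_div_left _ _ hp,
        Nat.div_eq_of_lt (by omega), zero_add]
    have c4 : dig p x t = p - 1 := by
      unfold dig
      rw [c2, Nat.add_mul_mod_self_left, Nat.mod_eq_of_lt (by omega)]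
    have c5 : del p t x = y := by
      unfold del
      rw [c3, c1, Nat.div_add_mod']
    refine ⟨x, ⟨?_, (h x).2 ⟨c4, by rw [c5]; exact hy.2⟩⟩, c5⟩
    have : x / p ^ (t + 1) < p ^ (N - t) := by
      rw [c3]
      apply Nat.div_lt_of_lt_mul
      rw [← hN]
      exact hy.1
    rw [hN1, mul_comm]
    rwa [Nat.div_lt_iff_lt_mul (pow_pos hp _)] at this

end S17

/-- if the base-`p` digits of `s` in positions `k-m-1, …, k-m-ℓ` all equal
`p-1` and `s'` is obtained by deleting the digit in position `k-m-ℓ`, then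
`bin_s ≡_ν Alt(bin_{s'}, p^{k-m-ℓ})`, `Π_i(bin_s) = Π_i(bin_{s'})` for all `i < ℓ`, and
`Z(bin_s) = Z(bin_{s'}) + (p-1)p^{k+ℓ-1}`. -/
theorem stmt17 (p l : ℕ) (hp : p.Prime) (hl : 1 ≤ l) (k m s : ℕ)
    (hkl : l < k) (hmk : m + l + 1 ≤ k)
    (hs1 : p ^ k ≤ s) (hs2 : s < p ^ (k + 1))
    (hdig : ∀ j, k - m - l ≤ j → j + m + 1 ≤ k → dig p s j = p - 1)
    (s' : ℕ)
    (hs' : s' = (s / p ^ (k - m - l + 1)) * p ^ (k - m - l) + s % p ^ (k - m - l)) :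
    nuEquiv p (binSeq p l s) (AltSeq (binSeq p l s') p (k - m - l)) ∧
    (∀ i < l, PiCount p i (binSeq p l s) = PiCount p i (binSeq p l s')) ∧
    ZCount (binSeq p l s) = ZCount (binSeq p l s') + (p - 1) * p ^ (k + l - 1) := by
  obtain ⟨t, ht⟩ : ∃ t, t = k - m - l := ⟨_, rfl⟩
  rw [← ht] at hs' hdig ⊢
  have ht1 : 1 ≤ t := by omega
  have hdig' : ∀ j, t ≤ j → j < t + l → dig p s j = p - 1 := fun j h1 h2 =>
    hdig j h1 (by omega)
  have hs'' : s' = S17.del p t s := hs'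
  clear hs'
  subst hs''
  have hE := S17.main_equiv p s t l hp ht1 hl hdig'
  have hpos := hp.pos
  have hq : 0 < p ^ t := pow_pos hpos _
  obtain ⟨k', rfl⟩ : ∃ k', k = k' + 1 := ⟨k - 1, by omega⟩
  have hP1 := S17.perSeq_bin p l s (k' + 1) hp hl hs1 hs2
  have e1 : p ^ k' = p ^ t * p ^ (k' - t) := by rw [← pow_add]; congr 1; omega
  have e2 : p ^ (k' + 1) = p ^ (t + 1) * p ^ (k' - t) := by rw [← pow_add]; congr 1; omega
  have e3 : p ^ (k' + 1) = p ^ t * p ^ (k' + 1 - t) := by rw [← pow_add]; congr 1; omega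
  have e4 : p ^ (k' + 1 + 1) = p ^ (t + 1) * p ^ (k' + 1 - t) := by
    rw [← pow_add]; congr 1; omega
  have hd1 : p ^ k' ≤ S17.del p t s := by
    rw [e1, mul_comm, ← Nat.le_div_iff_mul_le hq, S17.del_div p t s hpos,
      Nat.le_div_iff_mul_le (pow_pos hpos _), mul_comm, ← e2]
    exact hs1
  have hd2 : S17.del p t s < p ^ (k' + 1) := by
    rw [e3, mul_comm, ← Nat.div_lt_iff_lt_mul hq, S17.del_div p t s hpos,
      Nat.div_lt_iff_lt_mul (pow_pos hpos _), mul_comm, ← e4]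
    exact hs2
  have hP2 := S17.perSeq_bin p l (S17.del p t s) k' hp hl hd1 hd2
  have hA : ∀ x, dig p x t = p - 1 → AltSeq (binSeq p l (S17.del p t s)) p t x =
      binSeq p l (S17.del p t s) (S17.del p t x) := fun x h => if_pos h
  have hne : ∀ x, binSeq p l s x ≠ 0 ↔
      dig p x t = p - 1 ∧ binSeq p l (S17.del p t s) (S17.del p t x) ≠ 0 := by
    intro x
    rw [Ne, (hE x).1]
    by_cases h : dig p x t = p - 1
    · rw [hA x h]; simp only [h, true_and]
    · have : AltSeq (binSeq p l (S17.del p t s)) p t x = 0 := if_neg h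
      simp [this, h]
  have hvl : ∀ x, binSeq p l s x ≠ 0 → padicValNat p (binSeq p l s x).val =
      padicValNat p (binSeq p l (S17.del p t s) (S17.del p t x)).val := by
    intro x hx
    rw [(hE x).2 hx]
    have h := ((hne x).1 hx).1
    rw [hA x h]
  refine ⟨hE, ?_, ?_⟩
  · intro i _
    unfold PiCount
    rw [hP1, hP2, ← add_assoc l k' 1]
    apply S17.count p t (l + k') hpos (by omega)
    intro x
    rw [← and_assoc, ← hne x]
    constructor
    · rintro ⟨h1, h2⟩
      exact ⟨h1, by rw [← hvl x h1]; exact h2⟩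
    · rintro ⟨h1, h2⟩
      exact ⟨h1, by rw [hvl x h1]; exact h2⟩
  · have hc := S17.count p t (l + k') hpos (by omega) (fun x => binSeq p l s x ≠ 0)
      (fun x => binSeq p l (S17.del p t s) x ≠ 0) hne
    unfold ZCount
    rw [hP1, hP2, ← add_assoc l k' 1]
    have c1 := Finset.card_filter_add_card_filter_not (s := Finset.range (p ^ (l + k' + 1)))
      (fun x => binSeq p l s x = 0)
    have c2 := Finset.card_filter_add_card_filter_not (s := Finset.range (p ^ (l + k')))
      (fun x => binSeq p l (S17.del p t s) x = 0)
    rw [Finset.card_range] at c1 c2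
    have e : p ^ (l + k' + 1) = (p - 1) * p ^ (l + k') + p ^ (l + k') := by
      obtain ⟨r, rfl⟩ : ∃ r, p = r + 1 := ⟨p - 1, by omega⟩
      simp only [Nat.add_sub_cancel]
      ring
    rw [show k' + 1 + l - 1 = l + k' by omega]
    simp only [ne_eq] at hc
    omega
end

section
/- Let p be a prime and ℓ ≥ 1; work in Z_{p^ℓ}. Let k > ℓ and 0 ≤ m ≤ k−ℓ−1, and let s = ⌊b_k ⋯ b_{k−m} 0 ⋯ 0 b_{k−m−ℓ−1} ⋯ b_0⌋_p with b_k ≠ 0, where the digits in positions k−m−1 down to k−m−ℓ are all equal to 0 (ℓ consecutive zero digits). Let s' = ⌊b_k ⋯ b_{k−m} 0 ⋯ 0 b_{k−m−ℓ−1} ⋯ b_0⌋_p be obtained from s by deleting the digit in position k−m−1 (so only ℓ−1 consecutive zero digits remain). Then bin_s ≡_ν Double(bin_{s'}, p^{k−m−1}); in particular Π_i(bin_s) = p·Π_i(bin_{s'}) for every 0 ≤ i < ℓ, and Z(bin_s) = p·Z(bin_{s'}). -/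
open Finset in
theorem aux_val {p n s b : ℕ} [hp : Fact p.Prime] (h : s ≤ n) (hb : Nat.log p n < b) :
    padicValNat p (n.choose s) = ((Ico 1 b).filter fun i => n % p ^ i < s % p ^ i).card := by
  rw [padicValNat_choose h hb]
  congr 1
  apply Finset.filter_congr
  intro i _
  have hM : 0 < p ^ i := pow_pos hp.out.pos i
  generalize p ^ i = M at hM
  obtain ⟨c, rfl⟩ := Nat.exists_eq_add_of_le h
  rw [Nat.add_sub_cancel_left]
  have h1 := Nat.mod_lt s hM
  have h2 := Nat.mod_lt c hM
  rcases lt_or_ge (s % M + c % M) M with h3 | h3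
  · have := Nat.add_mod_of_add_mod_lt h3
    omega
  · have := Nat.add_mod_add_of_le_add_mod h3
    omega

theorem aux_cmp {A B x y : ℕ} (h : y % A ≤ x % A) (hA : 0 < A) :
    x % (A * B) < y % (A * B) ↔ x / A % B < y / A % B := by
  rw [Nat.mod_mul, Nat.mod_mul]
  have h1 := Nat.mod_lt x hA
  have h2 := Nat.mod_lt y hA
  generalize x / A % B = u
  generalize y / A % B = v
  constructor
  · intro h3
    by_contra h4
    have := Nat.mul_le_mul_left A (not_lt.mp h4)
    omega
  · intro h3
    have := Nat.mul_le_mul_left A (Nat.succ_le_of_lt h3)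
    rw [Nat.mul_succ] at this
    omega

theorem aux_le {A x y : ℕ} (h : y % A ≤ x % A) (hA : 0 < A) :
    y ≤ x ↔ y / A ≤ x / A := by
  refine ⟨fun h => Nat.div_le_div_right h, fun h3 => ?_⟩
  have := Nat.mul_le_mul_left A h3
  have h1 := Nat.div_add_mod x A
  have h2 := Nat.div_add_mod y A
  omega

open Finset in
theorem aux_zero {p n s a l : ℕ} [hp : Fact p.Prime] (ha : 1 ≤ a)
    (h : ∀ i, a ≤ i → i < a + l → n % p ^ i < s % p ^ i) : p ^ l ∣ n.choose s := by
  rcases lt_or_ge n s with hn | hn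
  · simp [Nat.choose_eq_zero_of_lt hn]
  · rw [padicValNat_dvd_iff_le (Nat.choose_pos hn).ne',
      aux_val (b := max (Nat.log p n + 1) (a + l)) hn (by omega)]
    calc l = (Ico a (a + l)).card := by simp
      _ ≤ _ := by
        apply card_le_card
        intro i hi
        simp only [mem_Ico, mem_filter] at hi ⊢
        refine ⟨⟨by omega, by omega⟩, h i hi.1 hi.2⟩

/-- delete digit t -/
def delDig (p t n : ℕ) : ℕ := n / p ^ (t + 1) * p ^ t + n % p ^ t

theorem delDig_div {p t : ℕ} (hp : 0 < p) (n : ℕ) : delDig p t n / p ^ t = n / p ^ (t + 1) := by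
  have : 0 < p ^ t := pow_pos hp t
  rw [delDig, add_comm, Nat.add_mul_div_right _ _ this, Nat.div_eq_of_lt (Nat.mod_lt _ this)]
  simp

theorem delDig_mod {p t i : ℕ} (hi : i ≤ t) (n : ℕ) : delDig p t n % p ^ i = n % p ^ i := by
  rw [delDig, Nat.add_mod, Nat.mod_mod_of_dvd _ (pow_dvd_pow p hi)]
  rw [Nat.mod_eq_zero_of_dvd (Dvd.dvd.mul_left (pow_dvd_pow p hi) _), zero_add, Nat.mod_mod]

open Finset in
theorem aux_eq {p n s t : ℕ} [hp : Fact p.Prime]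
    (hst : s / p ^ t % p = 0) (h : s % p ^ t ≤ n % p ^ t) :
    (s ≤ n ↔ delDig p t s ≤ delDig p t n) ∧
    (s ≤ n → padicValNat p (n.choose s) =
      padicValNat p ((delDig p t n).choose (delDig p t s))) := by
  have hp0 := hp.out.pos
  have hA : 0 < p ^ t := pow_pos hp0 t
  have hA1 : 0 < p ^ (t + 1) := pow_pos hp0 _
  have h1 : s % p ^ (t + 1) ≤ n % p ^ (t + 1) := by
    rw [pow_succ, Nat.mod_mul, Nat.mod_mul, hst]
    rw [mul_zero, add_zero]
    exact h.trans (Nat.le_add_right _ _)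
  have h' : delDig p t s % p ^ t ≤ delDig p t n % p ^ t := by
    rwa [delDig_mod le_rfl, delDig_mod le_rfl]
  have hle : s ≤ n ↔ delDig p t s ≤ delDig p t n := by
    rw [aux_le h1 hA1, aux_le h' hA, delDig_div hp0, delDig_div hp0]
  refine ⟨hle, fun hn => ?_⟩
  have hn' := hle.1 hn
  have hi : ∀ i, n % p ^ (t + 1 + i) < s % p ^ (t + 1 + i) ↔
      delDig p t n % p ^ (t + i) < delDig p t s % p ^ (t + i) := by
    intro i
    rw [pow_add p (t+1), pow_add p t i, aux_cmp h1 hA1, aux_cmp h' hA, delDig_div hp0,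
      delDig_div hp0]
  set b := max (max (Nat.log p n) (Nat.log p (delDig p t n)) + 1) (t + 2) with hb
  rw [aux_val (b := b + 1) hn (by omega), aux_val (b := b) hn' (by omega)]
  refine card_nbij' (fun i => if i ≤ t then i else i - 1)
    (fun i => if i ≤ t then i else i + 1) ?_ ?_ ?_ ?_
  · intro i hx
    simp only [coe_filter, mem_Ico, Set.mem_ofPred_eq] at hx ⊢
    split_ifs with hit
    · rw [delDig_mod hit, delDig_mod hit]
      exact ⟨by omega, hx.2⟩
    · obtain ⟨c, rfl⟩ := Nat.exists_eq_add_of_le (show t + 1 ≤ i by omega)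
      have := (hi c).1 hx.2
      rw [show t + 1 + c - 1 = t + c by omega]
      refine ⟨⟨?_, by omega⟩, this⟩
      by_contra h0
      have : t + c = 0 := by omega
      simp [this, Nat.mod_one] at *
  · intro i hx
    simp only [coe_filter, mem_Ico, Set.mem_ofPred_eq] at hx ⊢
    split_ifs with hit
    · rw [delDig_mod hit, delDig_mod hit] at hx
      exact ⟨by omega, hx.2⟩
    · obtain ⟨c, rfl⟩ := Nat.exists_eq_add_of_le (show t ≤ i by omega)
      have := (hi c).2 hx.2
      rw [show t + c + 1 = t + 1 + c by omega]
      exact ⟨by omega, this⟩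
  · intro i hx
    simp only [coe_filter, mem_Ico, Set.mem_ofPred_eq] at hx
    have : i ≠ t + 1 := by
      rintro rfl
      omega
    dsimp only
    split_ifs <;> omega
  · intro i hx
    dsimp only
    split_ifs <;> omega

theorem aux_valmod {p l a : ℕ} [hp : Fact p.Prime] (h : ¬ p ^ l ∣ a) :
    padicValNat p (a % p ^ l) = padicValNat p a := by
  have ha : a ≠ 0 := by rintro rfl; simp at h
  have hb : a % p ^ l ≠ 0 := fun h0 => h (Nat.dvd_of_mod_eq_zero h0)
  have key : ∀ j, j ≤ l → (p ^ j ∣ a % p ^ l ↔ p ^ j ∣ a) := fun j hj =>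
    Nat.dvd_mod_iff (pow_dvd_pow p hj)
  have hlt : ¬ l ≤ padicValNat p a := by rwa [← padicValNat_dvd_iff_le ha]
  have hlt' : ¬ l ≤ padicValNat p (a % p ^ l) := by
    rwa [← padicValNat_dvd_iff_le hb, key l le_rfl]
  apply le_antisymm
  · rw [← padicValNat_dvd_iff_le ha, ← key _ (by omega), padicValNat_dvd_iff_le hb]
  · rw [← padicValNat_dvd_iff_le hb, key _ (by omega), padicValNat_dvd_iff_le ha]

theorem bin_eq_zero {p l s n : ℕ} : binSeq p l s n = 0 ↔ p ^ l ∣ n.choose s := by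
  rw [binSeq, ZMod.natCast_eq_zero_iff]

theorem aux_nu {p l t s a : ℕ} (hp : p.Prime) (ha : 1 ≤ a) (hal : a + l = t + 1)
    (hl : 1 ≤ l)
    (hdig : ∀ j, a ≤ j → j ≤ t → dig p s j = 0) :
    nuEquiv p (binSeq p l s) (DoubleSeq (binSeq p l (delDig p t s)) p t) := by
  haveI : Fact p.Prime := ⟨hp⟩
  intro n
  change (binSeq p l s n = 0 ↔ binSeq p l (delDig p t s) (delDig p t n) = 0) ∧
    (binSeq p l s n ≠ 0 → padicValNat p (binSeq p l s n).val =
      padicValNat p (binSeq p l (delDig p t s) (delDig p t n)).val)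
  rcases lt_or_ge (n % p ^ t) (s % p ^ t) with h | h
  · have hs : ∀ i, a ≤ i → i ≤ t → s % p ^ i = s % p ^ a := by
      intro i hi
      induction i, hi using Nat.le_induction with
      | base => intro _; rfl
      | succ i hi ih =>
        intro hit
        have := hdig i hi (by omega)
        rw [dig] at this
        rw [pow_succ, Nat.mod_mul, this, ih (by omega)]; simp
    have hlt : ∀ i, a ≤ i → i < a + l → n % p ^ i < s % p ^ i := by
      intro i h1 h2
      rw [hs i h1 (by omega), ← hs t (by omega) le_rfl]
      refine lt_of_le_of_lt ?_ h
      rw [← Nat.mod_mod_of_dvd n (pow_dvd_pow p (show i ≤ t by omega))]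
      exact Nat.mod_le _ _
    have z1 := aux_zero ha hlt
    have z2 : p ^ l ∣ (delDig p t n).choose (delDig p t s) := by
      apply aux_zero ha
      intro i h1 h2
      rw [delDig_mod (by omega), delDig_mod (by omega)]
      exact hlt i h1 h2
    rw [bin_eq_zero.2 z1, bin_eq_zero.2 z2]
    simp
  · obtain ⟨e1, e2⟩ := aux_eq (hdig t (by omega) le_rfl) h
    rcases lt_or_ge n s with hn | hn
    · have hn' : delDig p t n < delDig p t s := by
        rw [← not_le, ← e1]; omega
      simp [binSeq, Nat.choose_eq_zero_of_lt hn, Nat.choose_eq_zero_of_lt hn']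
    · have hv := e2 hn
      have hd : p ^ l ∣ n.choose s ↔ p ^ l ∣ (delDig p t n).choose (delDig p t s) := by
        rw [padicValNat_dvd_iff_le (Nat.choose_pos hn).ne',
          padicValNat_dvd_iff_le (Nat.choose_pos (e1.1 hn)).ne', hv]
      rw [Ne, bin_eq_zero, bin_eq_zero]
      refine ⟨hd, fun h0 => ?_⟩
      rw [binSeq, binSeq, ZMod.val_natCast, ZMod.val_natCast, aux_valmod h0,
        aux_valmod (hd.not.1 h0), hv]

theorem aux_periodic {p l k s : ℕ} (hp : p.Prime) (hs2 : s < p ^ (k + 1)) :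
    Function.Periodic (binSeq p l s) (p ^ (l + k)) := by
  intro n
  simp only [binSeq]
  rw [add_comm n, Nat.add_choose_eq, Finset.Nat.sum_antidiagonal_eq_sum_range_succ_mk,
    Finset.sum_range_succ']
  push_cast
  rw [Finset.sum_eq_zero]
  · simp
  · intro j hj
    simp only [Finset.mem_range] at hj
    have : p ^ l ∣ (p ^ (l + k)).choose (j + 1) := by
      haveI : Fact p.Prime := ⟨hp⟩
      have h1 : j + 1 ≤ p ^ (l + k) ∨ p ^ (l + k) < j + 1 := le_or_gt _ _
      rcases h1 with h1 | h1
      · rw [padicValNat_dvd_iff_le (Nat.choose_pos h1).ne']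
        have h2 := Nat.add_one_mul_choose_eq (p ^ (l + k) - 1) j
        rw [Nat.sub_add_cancel (pow_pos hp.pos _)] at h2
        have h3 : p ^ (l + k) ∣ (p ^ (l + k)).choose (j + 1) * (j + 1) := ⟨_, h2.symm⟩
        rw [padicValNat_dvd_iff_le (by have := Nat.choose_pos h1; positivity),
          padicValNat.mul (Nat.choose_pos h1).ne' (by omega)] at h3
        have h4 : ¬ k + 1 ≤ padicValNat p (j + 1) := by
          rw [← padicValNat_dvd_iff_le (by omega)]
          intro h5
          have := Nat.le_of_dvd (by omega) h5
          omega
        omega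
      · simp [Nat.choose_eq_zero_of_lt h1]
    rw [(ZMod.natCast_eq_zero_iff _ _).2 this, zero_mul]

theorem aux_per_desc {p l s P d : ℕ} (h : Function.Periodic (binSeq p l (s + d)) P) :
    Function.Periodic (binSeq p l s) P := by
  induction d with
  | zero => exact h
  | succ d ih =>
    apply ih
    intro n
    have h1 := h n
    have h2 := h (n + 1)
    simp only [binSeq] at *
    rw [show n + 1 + P = n + P + 1 by omega, ← add_assoc, Nat.choose_succ_succ,
      Nat.choose_succ_succ] at h2
    push_cast at h2
    rw [← add_assoc] at h1
    rw [h1] at h2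
    exact add_right_cancel h2

theorem aux_perSeq {p l k s : ℕ} (hp : p.Prime) (hl : 1 ≤ l)
    (hs1 : p ^ k ≤ s) (hs2 : s < p ^ (k + 1)) :
    perSeq (binSeq p l s) = p ^ (l + k) := by
  haveI : Fact p.Prime := ⟨hp⟩
  have hP := aux_periodic (l := l) hp hs2
  have hne : {j | 1 ≤ j ∧ Function.Periodic (binSeq p l s) j}.Nonempty :=
    ⟨_, pow_pos hp.pos _, hP⟩
  obtain ⟨hd1, hd2⟩ := Nat.sInf_mem hne
  have hmin : ∀ j, 1 ≤ j → Function.Periodic (binSeq p l s) j → perSeq (binSeq p l s) ≤ j :=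
    fun j h1 h2 => Nat.sInf_le ⟨h1, h2⟩
  change 1 ≤ perSeq (binSeq p l s) at hd1
  change Function.Periodic _ (perSeq (binSeq p l s)) at hd2
  generalize perSeq (binSeq p l s) = d at *
  have hdvd : d ∣ p ^ (l + k) := by
    rw [Nat.dvd_iff_mod_eq_zero]
    by_contra h0
    have := hmin _ (Nat.one_le_iff_ne_zero.2 h0) (by
      intro x
      have h1 := hP x
      rw [← h1]
      conv_rhs => rw [← Nat.mod_add_div (p ^ (l + k)) d, mul_comm d, ← add_assoc]
      exact ((hd2.nat_mul (p ^ (l + k) / d)) _).symm)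
    have := Nat.mod_lt (p ^ (l + k)) hd1
    omega
  obtain ⟨a, ha, rfl⟩ := (Nat.dvd_prime_pow hp).1 hdvd
  rcases ha.eq_or_lt with rfl | ha
  · rfl
  exfalso
  obtain ⟨N, hN⟩ : ∃ N, l + k = N + 1 := ⟨l + k - 1, by omega⟩
  have hNper : Function.Periodic (binSeq p l s) (p ^ N) := by
    have := hd2.nat_mul (p ^ (N - a))
    simp only [Nat.cast_id] at this
    rwa [← pow_add, Nat.sub_add_cancel (by omega)] at this
  obtain ⟨c, rfl⟩ := Nat.exists_eq_add_of_le hs1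
  have h0 := aux_per_desc hNper 0
  rw [zero_add] at h0
  have h1 : binSeq p l (p ^ k) 0 = 0 := by
    simp [binSeq, Nat.choose_eq_zero_of_lt (pow_pos hp.pos k)]
  rw [h1, bin_eq_zero] at h0
  have hkN : p ^ k ≤ p ^ N := Nat.pow_le_pow_right hp.pos (by omega)
  have hpos := Nat.choose_pos hkN
  rw [padicValNat_dvd_iff_le hpos.ne'] at h0
  have h2 := Nat.add_one_mul_choose_eq (p ^ N - 1) (p ^ k - 1)
  rw [Nat.sub_add_cancel (pow_pos hp.pos _), Nat.sub_add_cancel (pow_pos hp.pos _)] at h2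
  have hle : p ^ k - 1 ≤ p ^ N - 1 := by omega
  have h3 := congrArg (padicValNat p) h2
  have hpN : p ^ N ≠ 0 := (pow_pos hp.pos _).ne'
  have hpk : p ^ k ≠ 0 := (pow_pos hp.pos _).ne'
  rw [padicValNat.mul hpN (Nat.choose_pos hle).ne', padicValNat.mul hpos.ne' hpk,
    padicValNat.prime_pow, padicValNat.prime_pow] at h3
  have h4 : padicValNat p ((p ^ N - 1).choose (p ^ k - 1)) = 0 := by
    rw [aux_val hle (Nat.lt_succ_self _), Finset.card_eq_zero, Finset.filter_eq_empty_iff]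
    intro i _
    rw [not_lt]
    have hm : ∀ c, i ≤ c → (p ^ c - 1) % p ^ i = p ^ i - 1 := by
      intro c hc
      obtain ⟨e, rfl⟩ := Nat.exists_eq_add_of_le hc
      have hi0 := pow_pos hp.pos i
      have he0 := pow_pos hp.pos e
      obtain ⟨u, hu⟩ : ∃ u, p ^ e = u + 1 := ⟨p ^ e - 1, by omega⟩
      rw [pow_add, hu, Nat.mul_succ, Nat.add_sub_assoc hi0, Nat.mul_add_mod,
        Nat.mod_eq_of_lt (by omega)]
    have hi0 := pow_pos hp.pos i
    rcases le_or_gt i N with hiN | hiN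
    · rw [hm N hiN]
      have := Nat.mod_lt (p ^ k - 1) hi0
      omega
    · have := Nat.pow_lt_pow_right hp.one_lt hiN
      rw [Nat.mod_eq_of_lt (by omega), Nat.mod_eq_of_lt (by omega)]
      exact hle
  omega

open Finset in
theorem aux_count {p t L : ℕ} (hp : 0 < p) (ht : t ≤ L) (Q R : ℕ → Prop)
    [DecidablePred Q] [DecidablePred R] (h : ∀ n, Q n ↔ R (delDig p t n)) :
    ((range (p ^ (L + 1))).filter Q).card = p * ((range (p ^ L)).filter R).card := by
  have hA := pow_pos hp t
  have hA1 := pow_pos hp (t + 1)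
  obtain ⟨e, rfl⟩ := Nat.exists_eq_add_of_le ht
  have hdel : ∀ n, n < p ^ (t + e + 1) ↔ delDig p t n < p ^ (t + e) := by
    intro n
    rw [show t + e + 1 = (t + 1) + e by omega, pow_add, pow_add p t e,
      mul_comm (p ^ (t + 1)), mul_comm (p ^ t),
      ← Nat.div_lt_iff_lt_mul hA1, ← Nat.div_lt_iff_lt_mul hA, delDig_div hp]
  have hinv : ∀ c y, c < p → delDig p t (y / p ^ t * p ^ (t + 1) + (c * p ^ t + y % p ^ t)) = y ∧
      (y / p ^ t * p ^ (t + 1) + (c * p ^ t + y % p ^ t)) / p ^ t % p = c := by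
    intro c y hc
    have hy := Nat.mod_lt y hA
    have hlt : c * p ^ t + y % p ^ t < p ^ (t + 1) := by
      rw [pow_succ]
      have := Nat.mul_le_mul_right (p ^ t) (Nat.succ_le_of_lt hc)
      rw [Nat.succ_mul] at this
      rw [mul_comm _ p]
      omega
    constructor
    · rw [delDig, add_comm, add_comm (y / p ^ t * p ^ (t + 1)), Nat.add_mul_div_right _ _ hA1,
        Nat.div_eq_of_lt hlt, add_assoc, pow_succ, mul_comm (p ^ t) p, ← mul_assoc, add_comm (y % p ^ t),
        ← add_assoc, ← add_mul, add_comm, Nat.mul_add_mod_self_right, Nat.mod_mod, zero_add, mul_comm,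
        Nat.div_add_mod]
    · rw [pow_succ, mul_comm (p ^ t) p, ← mul_assoc, ← add_assoc, ← add_mul, add_comm,
        Nat.add_mul_div_right _ _ hA, Nat.div_eq_of_lt hy, zero_add, Nat.mul_add_mod_self_right,
        Nat.mod_eq_of_lt hc]
  rw [← card_range p, ← card_product, card_range]
  refine card_nbij' (fun n => (n / p ^ t % p, delDig p t n))
    (fun cy => cy.2 / p ^ t * p ^ (t + 1) + (cy.1 * p ^ t + cy.2 % p ^ t)) ?_ ?_ ?_ ?_
  · intro n hn
    simp only [coe_filter, mem_range, Set.mem_ofPred_eq, coe_product, Set.mem_prod, coe_range,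
      Set.mem_Iio] at hn ⊢
    exact ⟨Nat.mod_lt _ hp, (hdel n).1 hn.1, (h n).1 hn.2⟩
  · rintro ⟨c, y⟩ hn
    simp only [coe_filter, mem_range, Set.mem_ofPred_eq, coe_product, Set.mem_prod, coe_range,
      Set.mem_Iio] at hn ⊢
    rw [hdel, h, (hinv c y hn.1).1]
    exact hn.2
  · intro n hn
    dsimp only
    rw [delDig_div hp, delDig_mod le_rfl]
    have h1 := Nat.div_add_mod n (p ^ (t + 1))
    have h2 := Nat.mod_mul (x := n) (a := p ^ t) (b := p)
    rw [← pow_succ] at h2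
    rw [mul_comm _ (p ^ (t + 1)), mul_comm _ (p ^ t)]
    omega
  · rintro ⟨c, y⟩ hn
    simp only [coe_filter, mem_range, Set.mem_ofPred_eq, coe_product, Set.mem_prod, coe_range,
      Set.mem_Iio] at hn
    exact Prod.ext (hinv c y hn.1).2 (hinv c y hn.1).1

/-- if the base-`p` digits of `s` in positions `k-m-1, …, k-m-ℓ` are all `0`
and `s'` is obtained by deleting the digit in position `k-m-1`, then
`bin_s ≡_ν Double(bin_{s'}, p^{k-m-1})`, `Π_i(bin_s) = p·Π_i(bin_{s'})` for all `i < ℓ`,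
and `Z(bin_s) = p·Z(bin_{s'})`. -/
theorem stmt18 (p l : ℕ) (hp : p.Prime) (hl : 1 ≤ l) (k m s : ℕ)
    (hkl : l < k) (hmk : m + l + 1 ≤ k)
    (hs1 : p ^ k ≤ s) (hs2 : s < p ^ (k + 1))
    (hdig : ∀ j, k - m - l ≤ j → j + m + 1 ≤ k → dig p s j = 0)
    (s' : ℕ)
    (hs' : s' = (s / p ^ (k - m)) * p ^ (k - m - 1) + s % p ^ (k - m - 1)) :
    nuEquiv p (binSeq p l s) (DoubleSeq (binSeq p l s') p (k - m - 1)) ∧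
    (∀ i < l, PiCount p i (binSeq p l s) = p * PiCount p i (binSeq p l s')) ∧
    ZCount (binSeq p l s) = p * ZCount (binSeq p l s') := by
  obtain ⟨t, ht⟩ : ∃ t, k - m = t + 1 := ⟨k - m - 1, by omega⟩
  have ht' : k - m - 1 = t := by omega
  have hss : s' = delDig p t s := by rw [hs', ht', ht, delDig]
  rw [ht']
  have hnu : nuEquiv p (binSeq p l s) (DoubleSeq (binSeq p l s') p t) := by
    rw [hss]
    exact aux_nu (a := k - m - l) hp (by omega) (by omega) hl
      (fun j h1 h2 => hdig j h1 (by omega))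
  obtain ⟨K, rfl⟩ : ∃ K, k = K + 1 := ⟨k - 1, by omega⟩
  obtain ⟨e, he⟩ : ∃ e, K = t + e := ⟨K - t, by omega⟩
  have hA := pow_pos hp.pos t
  have hA1 := pow_pos hp.pos (t + 1)
  have hb1 : p ^ K ≤ s' := by
    have h1 : p ^ e ≤ s / p ^ (t + 1) := by
      rw [Nat.le_div_iff_mul_le hA1, ← pow_add]
      rwa [show e + (t + 1) = K + 1 by omega]
    rw [← delDig_div hp.pos, ← hss, Nat.le_div_iff_mul_le hA, ← pow_add] at h1
    rwa [he, add_comm]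
  have hb2 : s' < p ^ (K + 1) := by
    have h1 : s / p ^ (t + 1) < p ^ (e + 1) := by
      rw [Nat.div_lt_iff_lt_mul hA1, ← pow_add]
      rwa [show e + 1 + (t + 1) = K + 1 + 1 by omega]
    rw [← delDig_div hp.pos, ← hss, Nat.div_lt_iff_lt_mul hA, ← pow_add] at h1
    rwa [show K + 1 = e + 1 + t by omega]
  have hper := aux_perSeq hp hl hs1 hs2
  have hper' := aux_perSeq hp hl hb1 hb2
  refine ⟨hnu, fun i _ => ?_, ?_⟩
  · rw [PiCount, PiCount, hper, hper', ← add_assoc]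
    apply aux_count (t := t) hp.pos (by omega)
    intro n
    obtain ⟨h1, h2⟩ := hnu n
    change (binSeq p l s n = 0 ↔ binSeq p l s' (delDig p t n) = 0) at h1
    change (_ → _ = padicValNat p (binSeq p l s' (delDig p t n)).val) at h2
    constructor
    · rintro ⟨h3, h4⟩
      exact ⟨h1.not.1 h3, (h2 h3).symm.trans h4⟩
    · rintro ⟨h3, h4⟩
      exact ⟨h1.not.2 h3, (h2 (h1.not.2 h3)).trans h4⟩
  · rw [ZCount, ZCount, hper, hper', ← add_assoc]
    apply aux_count (t := t) hp.pos (by omega)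
    intro n
    exact (hnu n).1
end
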